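/- Let H = (F, θ₀, θ₁, θ₂) be a connected combinatorial hypermap whose underlying hypergraph is a hypertree without cycles, i.e. |F| = 2·(v(H) + e(H) − 1). Then every partial dual of H has Euler genus zero: ε(H^A) = 0 for all A ⊆ E(H). Equivalently, the partial-dual Euler-genus polynomial of H is the constant 2^{e(H)}. -/

import Mathlib

open Classical

/-- A pre-hypermap on a set of flags `F`: three structure maps `θ₀, θ₁, θ₂`.
It is a genuine combinatorial hypermap when the three maps are
fixed-point-free involutions (see `PreHypermap.IsHypermap`). -/
structure PreHypermap (F : Type*) where
  theta : Fin 3 → F → F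

namespace PreHypermap

variable {F : Type*}

/-- `H` is a combinatorial hypermap: `θ₀, θ₁, θ₂` are fixed-point-free involutions. -/
def IsHypermap (H : PreHypermap F) : Prop :=
  ∀ i : Fin 3, Function.Involutive (H.theta i) ∧ ∀ x : F, H.theta i x ≠ x

/-- The equivalence relation on `F` generated by a set of functions `F → F`;
for a set of involutions, two flags are related iff they are in the same orbit
of the subgroup generated by those involutions. -/
def orbitRel (fs : Set (F → F)) : F → F → Prop :=
  Relation.EqvGen (fun x y => ∃ f ∈ fs, f x = y)

/-- The setoid of orbits of the subgroup generated by a set of involutions. -/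
def orbitSetoid (fs : Set (F → F)) : Setoid F :=
  Relation.EqvGen.setoid (fun x y => ∃ f ∈ fs, f x = y)

/-- The number of orbits on `F` of the subgroup generated by a set of involutions. -/
noncomputable def orbitCount (fs : Set (F → F)) : ℕ :=
  Nat.card (Quotient (orbitSetoid fs))

/-- `v H`: the number of vertices, i.e. orbits of `⟨θ₁, θ₂⟩`. -/
noncomputable def v (H : PreHypermap F) : ℕ := orbitCount {H.theta 1, H.theta 2}

/-- `e H`: the number of hyperedges, i.e. orbits of `⟨θ₀, θ₂⟩`. -/
noncomputable def e (H : PreHypermap F) : ℕ := orbitCount {H.theta 0, H.theta 2}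

/-- `f H`: the number of faces, i.e. orbits of `⟨θ₀, θ₁⟩`. -/
noncomputable def f (H : PreHypermap F) : ℕ := orbitCount {H.theta 0, H.theta 1}

/-- `c H`: the number of components, i.e. orbits of `⟨θ₀, θ₁, θ₂⟩`. -/
noncomputable def c (H : PreHypermap F) : ℕ :=
  orbitCount {H.theta 0, H.theta 1, H.theta 2}

/-- `H` is connected if it has exactly one component. -/
def Connected (H : PreHypermap F) : Prop := H.c = 1

/-- The Euler characteristic `χ(H) = v + e + f - |F|/2`. -/
noncomputable def chi (H : PreHypermap F) : ℤ :=
  (H.v : ℤ) + (H.e : ℤ) + (H.f : ℤ) - (Nat.card F : ℤ) / 2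

/-- The Euler genus `ε(H) = 2 c(H) - χ(H)`. -/
noncomputable def eulerGenus (H : PreHypermap F) : ℤ := 2 * (H.c : ℤ) - H.chi

/-- `H` is orientable: there is `o : F → {+1, -1}` with `o (θᵢ x) = - o x` for all `i, x`. -/
def Orientable (H : PreHypermap F) : Prop :=
  ∃ o : F → ℤ, (∀ x : F, o x = 1 ∨ o x = -1) ∧
    ∀ (i : Fin 3) (x : F), o (H.theta i x) = - o x

/-- The set `E(H)` of hyperedges of `H`, each hyperedge being its set of flags
(an orbit of `⟨θ₀, θ₂⟩`). -/
def edges (H : PreHypermap F) : Set (Set F) :=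
  {s : Set F | ∃ x : F, s = {y : F | orbitRel {H.theta 0, H.theta 2} x y}}

/-- The geometric dual `H* = (F, θ₂, θ₁, θ₀)`. -/
def dual (H : PreHypermap F) : PreHypermap F where
  theta := fun i => H.theta (2 - i)

/-- The partial dual of `H` with respect to a set `S` of flags (interchange `θ₀` and
`θ₂` on `S`); for `A ⊆ E(H)` the partial dual `H^A` is `H.pdual (⋃₀ A)`. -/
noncomputable def pdual (H : PreHypermap F) (S : Set F) : PreHypermap F where
  theta := fun i x =>
    if i = 1 then H.theta 1 x
    else if x ∈ S then H.theta (2 - i) x else H.theta i x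

/-- `f(A)` for `A ⊆ E(H)`: the number of orbits of `⟨θ₁, θ₂^A⟩` (which equals `v(H^A)`). -/
noncomputable def subf (H : PreHypermap F) (A : Set (Set F)) : ℕ :=
  (H.pdual (⋃₀ A)).v

/-- `c(A)` for `A ⊆ E(H)`: the number of orbits of the subgroup generated by `θ₁`, `θ₂`
and the permutation equal to `θ₀` on `S(A)` and the identity elsewhere. -/
noncomputable def subc (H : PreHypermap F) (A : Set (Set F)) : ℕ :=
  orbitCount {H.theta 1, H.theta 2, fun x => if x ∈ ⋃₀ A then H.theta 0 x else x}

/-- `χ(A) = v(A) + e(A) + f(A) - |S(A)|/2` for `A ⊆ E(H)`, where `v(A) = v(H)`,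
`e(A) = |A|`, `f(A) = v(H^A)` and `S(A) = ⋃₀ A`. -/
noncomputable def subchi (H : PreHypermap F) (A : Set (Set F)) : ℤ :=
  (H.v : ℤ) + (A.ncard : ℤ) + (H.subf A : ℤ) - ((⋃₀ A).ncard : ℤ) / 2

/-- `ε(A) = 2 c(A) - χ(A)` for `A ⊆ E(H)`. -/
noncomputable def subeps (H : PreHypermap F) (A : Set (Set F)) : ℤ :=
  2 * (H.subc A : ℤ) - H.subchi A

/-- The hyperedge set of `H` as a finset. -/
noncomputable def edgeFinset (H : PreHypermap F) [Fintype F] : Finset (Set F) :=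
  (Set.toFinite H.edges).toFinset

/-- The partial-dual Euler-genus polynomial `∂ε_H(z) = Σ_{A ⊆ E(H)} z^(ε(H^A))`. -/
noncomputable def pdPoly (H : PreHypermap F) [Fintype F] : Polynomial ℕ :=
  ∑ A ∈ H.edgeFinset.powerset,
    Polynomial.X ^ ((H.pdual (⋃₀ (A : Set (Set F)))).eulerGenus).toNat

/-- The partial-dual orientable-genus polynomial `∂Γ_H(z) = Σ_{A ⊆ E(H)} z^(ε(H^A)/2)`. -/
noncomputable def pdGammaPoly (H : PreHypermap F) [Fintype F] : Polynomial ℕ :=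
  ∑ A ∈ H.edgeFinset.powerset,
    Polynomial.X ^ (((H.pdual (⋃₀ (A : Set (Set F)))).eulerGenus) / 2).toNat

/-- The join `H₁ ∨ H₂` of two hypermaps on disjoint flag sets, joining the corner
`{x, θ₁ x}` of `H₁` to the corner `{y, θ₁′ y}` of `H₂`. -/
noncomputable def join {F₁ F₂ : Type*} (H₁ : PreHypermap F₁) (H₂ : PreHypermap F₂)
    (x : F₁) (y : F₂) : PreHypermap (F₁ ⊕ F₂) where
  theta := fun i z =>
    if i = 1 then
      if z = Sum.inl x then Sum.inr y
      else if z = Sum.inr y then Sum.inl x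
      else if z = Sum.inl (H₁.theta 1 x) then Sum.inr (H₂.theta 1 y)
      else if z = Sum.inr (H₂.theta 1 y) then Sum.inl (H₁.theta 1 x)
      else Sum.map (H₁.theta 1) (H₂.theta 1) z
    else Sum.map (H₁.theta i) (H₂.theta i) z

/-- The bar-amalgamation `H₁ ⊕ H₂` of two hypermaps on disjoint flag sets, with a new
connecting hyperedge `{p, q, p', q'} = Fin 4` meeting the corner `{x, θ₁ x}` of `H₁`
and the corner `{y, θ₁′ y}` of `H₂`. -/
noncomputable def bar {F₁ F₂ : Type*} (H₁ : PreHypermap F₁) (H₂ : PreHypermap F₂)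
    (x : F₁) (y : F₂) : PreHypermap ((F₁ ⊕ F₂) ⊕ Fin 4) where
  theta := fun i z =>
    if i = 0 then
      match z with
      | .inl (.inl a) => .inl (.inl (H₁.theta 0 a))
      | .inl (.inr b) => .inl (.inr (H₂.theta 0 b))
      | .inr k => .inr (Equiv.swap (0 : Fin 4) 2 (Equiv.swap (1 : Fin 4) 3 k))
    else if i = 2 then
      match z with
      | .inl (.inl a) => .inl (.inl (H₁.theta 2 a))
      | .inl (.inr b) => .inl (.inr (H₂.theta 2 b))
      | .inr k => .inr (Equiv.swap (0 : Fin 4) 1 (Equiv.swap (2 : Fin 4) 3 k))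
    else
      if z = .inl (.inl x) then .inr 0
      else if z = .inr 0 then .inl (.inl x)
      else if z = .inl (.inl (H₁.theta 1 x)) then .inr 1
      else if z = .inr 1 then .inl (.inl (H₁.theta 1 x))
      else if z = .inl (.inr y) then .inr 2
      else if z = .inr 2 then .inl (.inr y)
      else if z = .inl (.inr (H₂.theta 1 y)) then .inr 3
      else if z = .inr 3 then .inl (.inr (H₂.theta 1 y))
      else
        match z with
        | .inl (.inl a) => .inl (.inl (H₁.theta 1 a))
        | .inl (.inr b) => .inl (.inr (H₂.theta 1 b))
        | .inr k => .inr k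

end PreHypermap

/-!
Euler genus is nonnegative, so it suffices to bound that of a partial dual by `0` from above. Both
bounds are dimension counts for functions on flags with values in `𝔽₂`: those invariant under a set
of involutions form a space whose dimension is the number of orbits.

* Nonnegativity: the `θᵢ`-invariant functions form a subspace `Vᵢ` that is its own orthogonal
  complement, and `V₀ ∩ V₁` and `V₀ ∩ V₂` are orthogonal to both `V₀` and `V₁ ∩ V₂`. Comparing
  dimensions gives `v + e + f ≤ |F| / 2 + 2 c`.
* Upper bound: for a union `S` of hyperedges and `φ, ψ ∈ V₁ ∩ V₂`, splice `φ` on `S` with `ψ` off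
  `S`. The result lies in `V₂`, and when it lies in `V₀ ∩ V₂`, a condition of codimension at most
  `|F| / 2 - e`, then `φ` represents a vertex function and `ψ` a face function of the partial dual.
  Hence `v(H^S) + f(H^S) ≥ 2 v + e - |F| / 2`, so `ε(H^S)` is at most `|F| - 2 (v + e - c)`, twice
  the cycle rank of the incidence graph.
-/

section LinearAlgebra

open Module

variable {K V W : Type*} [Field K] [AddCommGroup V] [Module K V] [AddCommGroup W] [Module K W]

theorem finrank_submodule_prod [FiniteDimensional K V] [FiniteDimensional K W]
    (p : Submodule K V) (q : Submodule K W) :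
    finrank K (p.prod q) = finrank K p + finrank K q := by
  have h_range : LinearMap.range (p.subtype.prodMap q.subtype) = p.prod q := by
    rw [LinearMap.range_prodMap, p.range_subtype, q.range_subtype]
  have h_inj : Function.Injective (p.subtype.prodMap q.subtype) :=
    p.injective_subtype.prodMap q.injective_subtype
  rw [← h_range, LinearMap.finrank_range_of_inj h_inj, finrank_prod]

theorem finrank_add_finrank_le_finrank_comap_add_finrank [FiniteDimensional K V]
    [FiniteDimensional K W] (g : V →ₗ[K] W) (q : Submodule K W) :
    finrank K V + finrank K q ≤ finrank K (q.comap g) + finrank K W := by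
  have h_nullity := (q.mkQ ∘ₗ g).finrank_range_add_finrank_ker
  have h_range : finrank K (LinearMap.range (q.mkQ ∘ₗ g)) ≤ finrank K (W ⧸ q) :=
    Submodule.finrank_le _
  have h_quotient := q.finrank_quotient_add_finrank
  rw [LinearMap.ker_comp, q.ker_mkQ] at h_nullity
  omega

theorem finrank_add_finrank_le_finrank_inf_comap_add_finrank [FiniteDimensional K V]
    [FiniteDimensional K W] (g : V →ₗ[K] W) {p : Submodule K V} {q r : Submodule K W}
    (hpr : ∀ v ∈ p, g v ∈ r) (hqr : q ≤ r) :
    finrank K p + finrank K q ≤ finrank K (p ⊓ q.comap g : Submodule K V) + finrank K r := by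
  have h := finrank_add_finrank_le_finrank_comap_add_finrank (g.restrict hpr) (q.submoduleOf r)
  have h_comap : (q.submoduleOf r).comap (g.restrict hpr) = (q.comap g).submoduleOf p := rfl
  have h_inf : finrank K ((q.comap g).submoduleOf p) =
      finrank K (p ⊓ q.comap g : Submodule K V) := by
    rw [← Submodule.finrank_map_subtype_eq, Submodule.submoduleOf, Submodule.map_comap_subtype]
  rwa [(Submodule.submoduleOfEquivOfLe hqr).finrank_eq, h_comap, h_inf] at h

variable {B : LinearMap.BilinForm K V} {L M N : Submodule K V}

theorem inf_le_orthogonal_sup_of_isotropic (hL : L ≤ B.orthogonal L) (hM : M ≤ B.orthogonal M) :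
    L ⊓ M ≤ B.orthogonal (L ⊔ M) := by
  rintro x ⟨hxL, hxM⟩ y hy
  obtain ⟨l, hl, m, hm, rfl⟩ := Submodule.mem_sup.1 hy
  have hlx : B l x = 0 := hL hxL l hl
  have hmx : B m x = 0 := hM hxM m hm
  change B (l + m) x = 0
  rw [map_add, LinearMap.add_apply, hlx, hmx, add_zero]

variable [FiniteDimensional K V]

theorem finrank_add_finrank_le_of_le_orthogonal (hB : B.Nondegenerate)
    (h : M ≤ B.orthogonal L) : finrank K L + finrank K M ≤ finrank K V := by
  have h_finrank := Submodule.finrank_mono h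
  rw [LinearMap.BilinForm.finrank_orthogonal hB] at h_finrank
  have := L.finrank_le
  omega

/-- `L ⊓ M` and `L ⊓ N` are both orthogonal to `L ⊔ (M ⊓ N)`, which bounds the dimension of their
sum. -/
theorem finrank_inf_add_finrank_inf_add_finrank_inf_le_of_isotropic (hB : B.Nondegenerate)
    (hL : L ≤ B.orthogonal L) (hM : M ≤ B.orthogonal M) (hN : N ≤ B.orthogonal N) :
    finrank K (L ⊓ M : Submodule K V) + finrank K (L ⊓ N : Submodule K V) +
        finrank K (M ⊓ N : Submodule K V) + finrank K L ≤
      finrank K V + 2 * finrank K (L ⊓ (M ⊓ N) : Submodule K V) := by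
  have h_orthogonal : L ⊓ M ⊔ L ⊓ N ≤ B.orthogonal (L ⊔ M ⊓ N) := sup_le
    ((inf_le_orthogonal_sup_of_isotropic hL hM).trans
      (LinearMap.BilinForm.orthogonal_le (sup_le_sup_left inf_le_left L)))
    ((inf_le_orthogonal_sup_of_isotropic hL hN).trans
      (LinearMap.BilinForm.orthogonal_le (sup_le_sup_left inf_le_right L)))
  have h_le := finrank_add_finrank_le_of_le_orthogonal hB h_orthogonal
  have h_infs := Submodule.finrank_sup_add_finrank_inf_eq (L ⊓ M) (L ⊓ N)
  have h_sup := Submodule.finrank_sup_add_finrank_inf_eq L (M ⊓ N)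
  rw [← inf_inf_distrib_left] at h_infs
  omega

end LinearAlgebra

theorem nondegenerate_dotProductBilin (R ι : Type*) [CommSemiring R] [Fintype ι] :
    (dotProductBilin R R : LinearMap.BilinForm R (ι → R)).Nondegenerate :=
  ⟨fun v hv => dotProduct_eq_zero v hv,
    fun v hv => dotProduct_eq_zero v fun w => (dotProduct_comm v w).trans (hv w)⟩

namespace PreHypermap

section Invariants

variable (R : Type*) [Semiring R]

/-- The module of `R`-valued functions on `F` that are invariant under every map in `fs`. Over a
field its dimension is `orbitCount fs`, which turns orbit counting into linear algebra. -/
def invariants (fs : Set (F → F)) : Submodule R (F → R) where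
  carrier := {φ | ∀ g ∈ fs, ∀ x, φ (g x) = φ x}
  zero_mem' _ _ _ := rfl
  add_mem' hφ hψ g hg x := congrArg₂ (· + ·) (hφ g hg x) (hψ g hg x)
  smul_mem' c _ hφ g hg x := congrArg (c * ·) (hφ g hg x)

theorem invariants_insert (g : F → F) (fs : Set (F → F)) :
    invariants R (insert g fs) = invariants R {g} ⊓ invariants R fs := by
  ext φ
  simp [invariants]

theorem range_funLeft_quotientMk (fs : Set (F → F)) :
    LinearMap.range (LinearMap.funLeft R R (Quotient.mk (orbitSetoid fs))) = invariants R fs := by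
  ext φ
  constructor
  · rintro ⟨ψ, rfl⟩ g hg x
    exact congrArg ψ (Quotient.sound (.symm _ _ (.rel _ _ ⟨g, hg, rfl⟩)))
  · intro hφ
    have h_const : orbitSetoid fs ≤ Setoid.ker φ :=
      Setoid.eqvGen_le fun x y ⟨g, hg, hgx⟩ => hgx ▸ (hφ g hg x).symm
    exact ⟨Quotient.lift φ fun _ _ h => h_const h, rfl⟩

variable {R}

theorem mem_invariants_singleton {g : F → F} {φ : F → R} :
    φ ∈ invariants R {g} ↔ ∀ x, φ (g x) = φ x := by
  simp [invariants]

theorem mem_invariants_pair {g h : F → F} {φ : F → R} :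
    φ ∈ invariants R {g, h} ↔ (∀ x, φ (g x) = φ x) ∧ ∀ x, φ (h x) = φ x := by
  rw [invariants_insert, Submodule.mem_inf, mem_invariants_singleton, mem_invariants_singleton]

end Invariants

theorem invariants_le_orthogonal_invariants (R : Type*) [CommSemiring R] [CharP R 2] [Fintype F]
    {g : F → F} (hg : Function.Involutive g) (hfix : ∀ x, g x ≠ x) :
    invariants R {g} ≤ LinearMap.BilinForm.orthogonal (dotProductBilin R R) (invariants R {g}) := by
  intro φ hφ ψ hψ
  rw [mem_invariants_singleton] at hφ hψ
  refine Finset.sum_ninvolution g (fun x => ?_) (fun x _ => hfix x)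
    (fun x => Finset.mem_univ _) hg
  rw [hφ, hψ, CharTwo.add_self_eq_zero]

section Dimension

open Module

variable (K : Type*) [Field K] [Finite F]

theorem finrank_invariants (fs : Set (F → F)) : finrank K (invariants K fs) = orbitCount fs := by
  have := Fintype.ofFinite (Quotient (orbitSetoid fs))
  rw [← range_funLeft_quotientMk, LinearMap.finrank_range_of_inj
    (LinearMap.funLeft_injective_of_surjective K K _ Quotient.mk_surjective), finrank_pi,
    orbitCount, Nat.card_eq_fintype_card]

variable [CharP K 2] {g : F → F}

/-- `φ ↦ φ ∘ g + φ` has kernel `invariants K {g}` and, as `g` is an involution, image inside it. -/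
theorem card_le_two_mul_finrank_invariants (hg : Function.Involutive g) :
    Nat.card F ≤ 2 * finrank K (invariants K {g}) := by
  have := Fintype.ofFinite F
  let T : (F → K) →ₗ[K] (F → K) := LinearMap.funLeft K K g + LinearMap.id
  have h_ker : LinearMap.ker T = invariants K {g} := by
    ext φ
    simp only [T, LinearMap.mem_ker, funext_iff, mem_invariants_singleton]
    exact forall_congr' fun x => CharTwo.add_eq_zero
  have h_range : LinearMap.range T ≤ invariants K {g} := by
    rintro _ ⟨φ, rfl⟩
    refine mem_invariants_singleton.2 fun x => ?_
    change φ (g (g x)) + φ (g x) = φ (g x) + φ x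
    rw [hg x, add_comm]
  have h_nullity := T.finrank_range_add_finrank_ker
  rw [h_ker, finrank_pi, ← Nat.card_eq_fintype_card] at h_nullity
  have := Submodule.finrank_mono h_range
  omega

theorem two_mul_finrank_invariants_le_card (hg : Function.Involutive g) (hfix : ∀ x, g x ≠ x) :
    2 * finrank K (invariants K {g}) ≤ Nat.card F := by
  have := Fintype.ofFinite F
  have h := finrank_add_finrank_le_of_le_orthogonal (nondegenerate_dotProductBilin K F)
    (invariants_le_orthogonal_invariants K hg hfix)
  rwa [finrank_pi, ← Nat.card_eq_fintype_card, ← two_mul] at h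

end Dimension

theorem IsHypermap.eulerGenus_nonneg [Finite F] {H : PreHypermap F} (hH : H.IsHypermap) :
    0 ≤ H.eulerGenus := by
  have := Fintype.ofFinite F
  have h_isotropic (i : Fin 3) :=
    invariants_le_orthogonal_invariants (ZMod 2) (hH i).1 (hH i).2
  have h_infs := finrank_inf_add_finrank_inf_add_finrank_inf_le_of_isotropic
    (nondegenerate_dotProductBilin (ZMod 2) F) (h_isotropic 0) (h_isotropic 1) (h_isotropic 2)
  rw [← invariants_insert, ← invariants_insert, ← invariants_insert, ← invariants_insert,
    Module.finrank_pi, ← Nat.card_eq_fintype_card] at h_infs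
  have h_card := card_le_two_mul_finrank_invariants (ZMod 2) (hH 0).1
  simp only [finrank_invariants] at h_infs h_card
  unfold eulerGenus chi v e f c
  omega

section PartialDual

variable {H : PreHypermap F} {S : Set F}

theorem pdual_theta_zero (H : PreHypermap F) (S : Set F) (x : F) :
    (H.pdual S).theta 0 x = if x ∈ S then H.theta 2 x else H.theta 0 x := rfl

theorem pdual_theta_one (H : PreHypermap F) (S : Set F) : (H.pdual S).theta 1 = H.theta 1 := rfl

theorem pdual_theta_two (H : PreHypermap F) (S : Set F) (x : F) :
    (H.pdual S).theta 2 x = if x ∈ S then H.theta 0 x else H.theta 2 x := rfl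

theorem invariants_pdual_zero_two (R : Type*) [Semiring R] (H : PreHypermap F) (S : Set F) :
    invariants R {(H.pdual S).theta 0, (H.pdual S).theta 2} =
      invariants R {H.theta 0, H.theta 2} := by
  ext φ
  simp only [mem_invariants_pair, ← forall_and, pdual_theta_zero, pdual_theta_two]
  refine forall_congr' fun x => ?_
  split_ifs
  exacts [and_comm, Iff.rfl]

theorem pdual_e [Finite F] (H : PreHypermap F) (S : Set F) : (H.pdual S).e = H.e := by
  rw [e, e, ← finrank_invariants (ZMod 2), ← finrank_invariants (ZMod 2),
    invariants_pdual_zero_two]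

theorem pdual_c [Finite F] (H : PreHypermap F) (S : Set F) : (H.pdual S).c = H.c := by
  rw [c, c, Set.insert_comm, Set.insert_comm (H.theta 0), pdual_theta_one,
    ← finrank_invariants (ZMod 2), ← finrank_invariants (ZMod 2), invariants_insert,
    invariants_insert _ (H.theta 1), invariants_pdual_zero_two]

/-- `S` is a union of hyperedges: it is closed under `θ₀` and `θ₂` and so is its complement. -/
def IsEdgeSaturated (H : PreHypermap F) (S : Set F) : Prop :=
  ∀ i ≠ 1, ∀ x, H.theta i x ∈ S ↔ x ∈ S

theorem isEdgeSaturated_sUnion {A : Set (Set F)} (hA : A ⊆ H.edges) :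
    H.IsEdgeSaturated (⋃₀ A) := by
  intro i hi x
  have h_step : orbitRel {H.theta 0, H.theta 2} x (H.theta i x) :=
    .rel _ _ ⟨H.theta i, by fin_cases i <;> simp_all, rfl⟩
  refine exists_congr fun s => and_congr_right fun hs => ?_
  obtain ⟨y, rfl⟩ := hA hs
  exact ⟨fun h => .trans _ _ _ h (.symm _ _ h_step), fun h => .trans _ _ _ h h_step⟩

theorem IsHypermap.pdual (hH : H.IsHypermap) (hS : H.IsEdgeSaturated S) :
    (H.pdual S).IsHypermap := by
  have h_zero (x : F) : H.theta 0 x ∈ S ↔ x ∈ S := hS 0 (by decide) x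
  have h_two (x : F) : H.theta 2 x ∈ S ↔ x ∈ S := hS 2 (by decide) x
  intro i
  fin_cases i
  · refine ⟨fun x => ?_, fun x => ?_⟩ <;> by_cases hx : x ∈ S <;>
      simp [pdual_theta_zero, hx, h_zero, h_two, (hH 0).1 x, (hH 2).1 x, (hH 0).2, (hH 2).2]
  · exact hH 1
  · refine ⟨fun x => ?_, fun x => ?_⟩ <;> by_cases hx : x ∈ S <;>
      simp [pdual_theta_two, hx, h_zero, h_two, (hH 0).1 x, (hH 2).1 x, (hH 0).2, (hH 2).2]

end PartialDual

section Splice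

variable {R : Type*} [Semiring R] {H : PreHypermap F} {S : Set F}

/-- The function that agrees with `φ` on `S` and with `ψ` elsewhere, as a linear map in `(φ, ψ)`. It
tests `θ₀`-invariance of `φ` on `S` and of `ψ` off `S` at the same time. -/
noncomputable def splice (R : Type*) [Semiring R] (S : Set F) :
    (F → R) × (F → R) →ₗ[R] (F → R) where
  toFun p x := if x ∈ S then p.1 x else p.2 x
  map_add' p q := by
    ext x
    simp only [Prod.fst_add, Prod.snd_add, Pi.add_apply]
    split_ifs <;> rfl
  map_smul' c p := by
    ext x
    simp only [Prod.smul_fst, Prod.smul_snd, Pi.smul_apply, RingHom.id_apply]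
    split_ifs <;> rfl

theorem splice_apply (p : (F → R) × (F → R)) (x : F) :
    splice R S p x = if x ∈ S then p.1 x else p.2 x := rfl

theorem splice_mem_invariants_two (hS : H.IsEdgeSaturated S)
    {p : (F → R) × (F → R)} (hp : p ∈ (invariants R {H.theta 1, H.theta 2}).prod
      (invariants R {H.theta 1, H.theta 2})) :
    splice R S p ∈ invariants R {H.theta 2} := by
  refine mem_invariants_singleton.2 fun x => ?_
  rw [Submodule.mem_prod, mem_invariants_pair, mem_invariants_pair] at hp
  rw [splice_apply, splice_apply, hp.1.2, hp.2.2, if_congr (hS 2 (by decide) x) rfl rfl]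

theorem prod_inf_comap_splice_le (hS : H.IsEdgeSaturated S) :
    (invariants R {H.theta 1, H.theta 2}).prod (invariants R {H.theta 1, H.theta 2}) ⊓
        (invariants R {H.theta 0, H.theta 2}).comap (splice R S) ≤
      (invariants R {(H.pdual S).theta 1, (H.pdual S).theta 2}).prod
        (invariants R {(H.pdual S).theta 0, (H.pdual S).theta 1}) := by
  rintro ⟨φ, ψ⟩ ⟨hp, h_splice⟩
  simp only [Submodule.mem_prod, mem_invariants_pair, pdual_theta_one, SetLike.mem_coe] at hp ⊢
  have h_zero (x : F) := (mem_invariants_pair.1 h_splice).1 x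
  simp only [splice_apply, hS 0 (by decide)] at h_zero
  obtain ⟨⟨hφ₁, hφ₂⟩, hψ₁, hψ₂⟩ := hp
  refine ⟨⟨hφ₁, fun x => ?_⟩, fun x => ?_, hψ₁⟩
  · rw [pdual_theta_two]
    by_cases hx : x ∈ S
    · simpa only [if_pos hx] using h_zero x
    · rw [if_neg hx, hφ₂]
  · rw [pdual_theta_zero]
    by_cases hx : x ∈ S
    · rw [if_pos hx, hψ₂]
    · simpa only [if_neg hx] using h_zero x

end Splice

section GenusBounds

variable [Finite F] {H : PreHypermap F} {S : Set F}

theorem two_mul_v_add_e_le (hS : H.IsEdgeSaturated S) :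
    2 * H.v + H.e ≤ (H.pdual S).v + (H.pdual S).f + orbitCount {H.theta 2} := by
  have h_edges : invariants (ZMod 2) {H.theta 0, H.theta 2} ≤ invariants (ZMod 2) {H.theta 2} :=
    (invariants_insert (ZMod 2) _ _).trans_le inf_le_right
  have h_splice := finrank_add_finrank_le_finrank_inf_comap_add_finrank (splice (ZMod 2) S)
    (fun _ => splice_mem_invariants_two hS) h_edges
  have h_pdual := Submodule.finrank_mono (prod_inf_comap_splice_le (R := ZMod 2) hS)
  simp only [finrank_submodule_prod, finrank_invariants] at h_splice h_pdual
  unfold v e f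
  omega

theorem IsHypermap.eulerGenus_pdual_le (hH : H.IsHypermap) (hS : H.IsEdgeSaturated S) :
    (H.pdual S).eulerGenus ≤ Nat.card F - 2 * ((H.v : ℤ) + H.e - H.c) := by
  have h_v_f := two_mul_v_add_e_le hS
  have h_card := two_mul_finrank_invariants_le_card (ZMod 2) (hH 2).1 (hH 2).2
  rw [finrank_invariants] at h_card
  rw [eulerGenus, chi, pdual_e, pdual_c]
  omega

end GenusBounds

section GenusPolynomial

variable (H : PreHypermap F)

theorem edges_eq_classes : H.edges = (orbitSetoid {H.theta 0, H.theta 2}).classes := by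
  have h_symm (x : F) : {y | orbitRel {H.theta 0, H.theta 2} x y} =
      {y | orbitSetoid {H.theta 0, H.theta 2} y x} :=
    Set.ext fun y => (orbitSetoid {H.theta 0, H.theta 2}).comm' (x := x) (y := y)
  simp only [edges, Setoid.classes, h_symm]

variable [Fintype F]

theorem card_edgeFinset : H.edgeFinset.card = H.e := by
  rw [edgeFinset, ← Set.ncard_eq_toFinset_card, ← Nat.card_coe_set_eq, edges_eq_classes]
  exact Nat.card_congr (Setoid.quotientEquivClasses _).symm

theorem pdPoly_eq_C_two_pow_of_eulerGenus_pdual_eq_zero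
    (h : ∀ A ⊆ H.edges, (H.pdual (⋃₀ A)).eulerGenus = 0) :
    H.pdPoly = Polynomial.C (2 ^ H.e) := by
  have h_term (A : Finset (Set F)) (hA : A ∈ H.edgeFinset.powerset) :
      (Polynomial.X ^ (H.pdual (⋃₀ (A : Set (Set F)))).eulerGenus.toNat : Polynomial ℕ) = 1 := by
    have hA_edges : (A : Set (Set F)) ⊆ H.edges := fun s hs =>
      (Set.Finite.mem_toFinset _).1 (Finset.mem_powerset.1 hA hs)
    rw [h _ hA_edges, Int.toNat_zero, pow_zero]
  rw [pdPoly, Finset.sum_congr rfl h_term, Finset.sum_const, Finset.card_powerset,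
    card_edgeFinset]
  simp

end GenusPolynomial

end PreHypermap

open PreHypermap in
theorem statement_15_general {F : Type*} [Fintype F] (H : PreHypermap F) (hH : H.IsHypermap)
    (hforest : (Nat.card F : ℤ) = 2 * ((H.v : ℤ) + (H.e : ℤ) - (H.c : ℤ))) :
    (∀ A ⊆ H.edges, (H.pdual (⋃₀ A)).eulerGenus = 0) ∧
    H.pdPoly = Polynomial.C (2 ^ H.e) := by
  have h_genus (A : Set (Set F)) (hA : A ⊆ H.edges) : (H.pdual (⋃₀ A)).eulerGenus = 0 := by
    have hS := isEdgeSaturated_sUnion hA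
    refine le_antisymm ?_ (hH.pdual hS).eulerGenus_nonneg
    exact (hH.eulerGenus_pdual_le hS).trans_eq (sub_eq_zero.2 hforest)
  exact ⟨h_genus, H.pdPoly_eq_C_two_pow_of_eulerGenus_pdual_eq_zero h_genus⟩

open PreHypermap in
/-- If `H` is a connected hypermap whose underlying hypergraph is a hypertree without
cycles, i.e. `|F| = 2 (v(H) + e(H) - 1)`, then every partial dual of `H` has Euler genus
zero, and the partial-dual Euler-genus polynomial is the constant `2 ^ e(H)`. -/
theorem statement_15 {F : Type} [Fintype F] (H : PreHypermap F)
    (hH : H.IsHypermap) (hconn : H.Connected)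
    (htree : (Nat.card F : ℤ) = 2 * ((H.v : ℤ) + (H.e : ℤ) - 1)) :
    (∀ A ⊆ H.edges, (H.pdual (⋃₀ A)).eulerGenus = 0) ∧
    H.pdPoly = Polynomial.C (2 ^ H.e) := by
  exact statement_15_general H hH (by rw [htree, show H.c = 1 from hconn, Nat.cast_one])
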